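/- Let 1/2 ≤ α < 1 and f ∈ K(α). Define M(α) = sup_{0<θ<π} Im(e^{−iθ}·k_α(e^{iθ})), where k_α extends analytically to the unit circle minus the point 1. Then |Im(f(z)/z)| < M(α) for all z ∈ 𝔻 \ {0}, and M(α) ≤ M(1/2) = π/2. -/

import Mathlib

/-- The unit disk `{z : ℂ | |z| < 1}`. -/
noncomputable def unitDisk : Set ℂ := Metric.ball 0 1

/-- The extremal convex function of order `α`:
`k_α(z) = ((1-z)^(2α-1) - 1)/(1-2α)` (so that `k_α(0)=0`, `k_α'(0)=1`),
with `k_{1/2}(z) = -log(1-z)` (principal branches). -/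
noncomputable def kfun (α : ℝ) (z : ℂ) : ℂ :=
  if α = 1 / 2 then -Complex.log (1 - z)
  else ((1 - z) ^ ((2 * α - 1 : ℝ) : ℂ) - 1) / ((1 - 2 * α : ℝ) : ℂ)

/-- `h_α(z) = k_α(z)/z` for `z ≠ 0`, `h_α(0) = 1`. -/
noncomputable def hfun (α : ℝ) (z : ℂ) : ℂ :=
  if z = 0 then 1 else kfun α z / z

/-- `f ∈ K(α)`: `f` is analytic on the unit disk, normalized by `f(0)=0`, `f'(0)=1`,
with nonvanishing derivative and `Re(1 + z f''(z)/f'(z)) > α` on the disk. -/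
def IsConvexOfOrder (α : ℝ) (f : ℂ → ℂ) : Prop :=
  DifferentiableOn ℂ f unitDisk ∧ f 0 = 0 ∧ deriv f 0 = 1 ∧
    ∀ z ∈ unitDisk, deriv f z ≠ 0 ∧
      α < (1 + z * deriv (deriv f) z / deriv f z).re

/-- `M(α) = sup_{0<θ<π} Im (e^{-iθ} k_α(e^{iθ}))`. -/
noncomputable def Mconst (α : ℝ) : ℝ :=
  sSup {y : ℝ | ∃ θ ∈ Set.Ioo (0 : ℝ) Real.pi,
    y = (Complex.exp (-(θ : ℂ) * Complex.I) * kfun α (Complex.exp ((θ : ℂ) * Complex.I))).im}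

/-!
Let `q = 2 - 2α ∈ (0, 1]`. Convexity of order `α` says that `Q(z) = 1 + 2 z f''(z) / (q f'(z))` has
positive real part. Inserting the Herglotz representation of `Q` on a circle of radius `R < 1` into
`log f'(w) = ∫₀¹ w (f''/f')(s w) ds` displays `log f' / q` as an average of the functions
`w ↦ -log (1 - w / ζ)`, `‖ζ‖ = R`. The beta integral
`A ^ (-a) * B ^ (-b) = ∫ (s A + (1 - s) B) ^ (-(a + b)) dBeta(a, b)(s)` shows that products of
elements of the closed convex hulls of `{w ↦ (1 - w u) ^ (-a)}` and `{w ↦ (1 - w u) ^ (-b)}` lie in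
that of `{w ↦ (1 - w u) ^ (-(a + b))}`. Hence the `v` for which `exp (p v)` lies in the hull of
exponent `p` for every `p > 0` form a closed convex set, which contains `log f' / q`.
Integrating along rays, `f(z) / z` lies in the closed convex hull of the values of
`h_α(u) = k_α(u) / u`.

It remains to bound `Im h_α`. For `α = 1/2` and `0 < Im u`, `Im h_{1/2}(u)` is at most
`Im k_{1/2}(u) = -arg (1 - u) < π / 2`. Since `k_α ∈ K(α) ⊆ K(1/2)`, the hull statement applied to
`k_α` itself transfers the bound `π / 2` to every `α ≥ 1/2`, so `M(α) ≤ π / 2`; letting `θ → 0`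
gives `M(1/2) = π / 2`. For `α > 1/2` the function `h_α` is continuous on the closed disk, and the
maximum principle for `exp (-i h_α)` gives the strict inequality.
-/

section

open MeasureTheory Set Filter Metric ProbabilityTheory

/-! ### The beta integral of complex powers -/

lemma integrableOn_rpow_mul_exp_neg_mul {a r : ℝ} (ha : 0 < a) (hr : 0 < r) :
    IntegrableOn (fun t ↦ t ^ (a - 1) * Real.exp (-(r * t))) (Ioi 0) := by
  simpa [neg_mul] using integrableOn_rpow_mul_exp_neg_mul_rpow (by linarith : -1 < a - 1)
    zero_lt_one hr

lemma integrableOn_rpow_smul_exp_neg_mul {a : ℝ} (ha : 0 < a) {r : ℂ} (hr : 0 < r.re) :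
    IntegrableOn (fun t : ℝ ↦ t ^ (a - 1) • Complex.exp (-(r * t))) (Ioi 0) := by
  refine (integrableOn_rpow_mul_exp_neg_mul ha hr).mono'
    (Measurable.aestronglyMeasurable (by fun_prop)) ?_
  filter_upwards [ae_restrict_mem measurableSet_Ioi] with t ht
  simp [Complex.norm_exp, abs_of_nonneg (Real.rpow_nonneg (le_of_lt ht) _)]

lemma integral_rpow_smul_exp_neg_ofReal_mul {a x : ℝ} (ha : 0 < a) (hx : 0 < x) :
    ∫ t in Ioi (0 : ℝ), t ^ (a - 1) • Complex.exp (-((x : ℂ) * t)) =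
      Real.Gamma a * (x : ℂ) ^ (-a : ℂ) := by
  have harg : (x : ℂ).arg ≠ Real.pi := by
    simp [Complex.arg_ofReal_of_nonneg hx.le, Real.pi_ne_zero.symm]
  have h := Complex.integral_cpow_mul_exp_neg_mul_Ioi (a := a) (by simpa using ha) hx
  rw [one_div, Complex.inv_cpow _ _ harg, ← Complex.cpow_neg, Complex.Gamma_ofReal, mul_comm] at h
  rw [← h]
  refine setIntegral_congr_fun measurableSet_Ioi fun t ht ↦ ?_
  simp [Complex.ofReal_cpow (le_of_lt ht)]

lemma eqOn_re_pos_of_forall_ofReal {f g : ℂ → ℂ} (hf : AnalyticOnNhd ℂ f {z | 0 < z.re})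
    (hg : AnalyticOnNhd ℂ g {z | 0 < z.re}) (hfg : ∀ x : ℝ, 0 < x → f x = g x) :
    EqOn f g {z | 0 < z.re} := by
  have htendsto : Tendsto Complex.ofReal (nhdsWithin 1 {1}ᶜ) (nhdsWithin 1 {1}ᶜ) := by
    simpa using Complex.continuous_ofReal.continuousWithinAt.tendsto_nhdsWithin
      (s := {(1 : ℝ)}ᶜ) (t := {(1 : ℂ)}ᶜ) (x := 1) fun x hx ↦ by simpa using hx
  have hfreq : ∃ᶠ z in nhdsWithin (1 : ℂ) {1}ᶜ, f z = g z :=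
    htendsto.frequently <| Eventually.frequently <|
      mem_nhdsWithin_of_mem_nhds ((lt_mem_nhds one_pos).mono hfg)
  exact hf.eqOn_of_preconnected_of_frequently_eq hg
    (convex_halfSpace_re_gt 0).isPreconnected (by simp) hfreq

lemma integral_rpow_smul_exp_neg_mul {a : ℝ} (ha : 0 < a) {r : ℂ} (hr : 0 < r.re) :
    ∫ t in Ioi (0 : ℝ), t ^ (a - 1) • Complex.exp (-(r * t)) =
      Real.Gamma a * r ^ (-a : ℂ) := by
  set ν : Measure ℝ := (volume.restrict (Ioi 0)).withDensity fun t ↦ ENNReal.ofReal (t ^ (a - 1))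
  have hdens : Measurable fun t : ℝ ↦ ENNReal.ofReal (t ^ (a - 1)) := by fun_prop
  have hlap (z : ℂ) : complexMGF id ν (-z) =
      ∫ t in Ioi (0 : ℝ), t ^ (a - 1) • Complex.exp (-(z * t)) := by
    rw [complexMGF, integral_withDensity_eq_integral_toReal_smul hdens (by simp)]
    refine setIntegral_congr_fun measurableSet_Ioi fun t ht ↦ ?_
    simp [ENNReal.toReal_ofReal (Real.rpow_nonneg (le_of_lt ht) _)]
  have hint : Iio 0 ⊆ integrableExpSet id ν := fun x hx ↦ by
    rw [integrableExpSet, mem_ofPred_eq,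
      integrable_withDensity_iff_integrable_smul' hdens (by simp)]
    refine (integrableOn_rpow_mul_exp_neg_mul ha (neg_pos.2 hx)).congr_fun (fun t ht ↦ ?_)
      measurableSet_Ioi
    simp [ENNReal.toReal_ofReal (Real.rpow_nonneg (le_of_lt ht) _)]
  have hmaps : MapsTo (fun z : ℂ ↦ -z) {z | 0 < z.re}
      {z | z.re ∈ interior (integrableExpSet id ν)} :=
    fun z hz ↦ interior_maximal hint isOpen_Iio (by simpa using hz)
  have hleft : AnalyticOnNhd ℂ (fun z ↦ complexMGF id ν (-z)) {z | 0 < z.re} :=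
    analyticOnNhd_complexMGF.comp analyticOnNhd_id.neg hmaps
  have hright : AnalyticOnNhd ℂ (fun z : ℂ ↦ Real.Gamma a * z ^ (-a : ℂ)) {z | 0 < z.re} :=
    fun z hz ↦ analyticAt_const.mul (analyticAt_id.cpow analyticAt_const (Or.inl hz))
  rw [← hlap]
  exact eqOn_re_pos_of_forall_ofReal hleft hright
    (fun x hx ↦ (hlap x).trans (integral_rpow_smul_exp_neg_ofReal_mul ha hx)) hr

lemma measurable_betaPDF (a b : ℝ) : Measurable (betaPDF a b) :=
  (measurable_betaPDFReal a b).ennreal_ofReal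

lemma integral_betaMeasure {E : Type*} [NormedAddCommGroup E] [NormedSpace ℝ E] {a b : ℝ}
    (ha : 0 < a) (hb : 0 < b) (f : ℝ → E) :
    ∫ s, f s ∂betaMeasure a b =
      (beta a b)⁻¹ • ∫ s in (0)..1, (s ^ (a - 1) * (1 - s) ^ (b - 1)) • f s := by
  rw [betaMeasure, integral_withDensity_eq_integral_toReal_smul
    (measurable_betaPDF a b) (by simp [betaPDF]),
    intervalIntegral.integral_of_le zero_le_one, integral_Ioc_eq_integral_Ioo,
    ← integral_indicator measurableSet_Ioo, ← integral_smul]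
  congr 1 with s
  by_cases hs : s ∈ Ioo (0 : ℝ) 1
  · rw [betaPDF, ENNReal.toReal_ofReal (betaPDFReal_pos hs.1 hs.2 ha hb).le, betaPDFReal,
      if_pos (show 0 < s ∧ s < 1 from hs), indicator_of_mem hs, smul_smul]
    ring_nf
  · have hs' : ¬(0 < s ∧ s < 1) := hs
    simp [betaPDF, betaPDFReal, hs', hs]

lemma ae_mem_Ioo_betaMeasure (a b : ℝ) : ∀ᵐ s ∂betaMeasure a b, s ∈ Ioo (0 : ℝ) 1 := by
  rw [betaMeasure, ae_withDensity_iff (measurable_betaPDF a b)]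
  refine .of_forall fun s hs ↦ ?_
  contrapose! hs
  have hs' : ¬(0 < s ∧ s < 1) := hs
  simp [betaPDF, betaPDFReal, hs']

lemma integral_rpow_smul_exp_mul_rpow_smul_exp_sub {a b : ℝ} (ha : 0 < a) (hb : 0 < b)
    (A B : ℂ) {x : ℝ} (hx : 0 < x) :
    ∫ t in (0)..x, t ^ (a - 1) • Complex.exp (-(A * t)) *
        (x - t) ^ (b - 1) • Complex.exp (-(B * ↑(x - t))) =
      beta a b • ∫ s, x ^ (a + b - 1) • Complex.exp (-((s * A + (1 - s) * B) * x))
        ∂betaMeasure a b := by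
  rw [integral_betaMeasure ha hb, smul_inv_smul₀ (beta_pos ha hb).ne']
  have h := intervalIntegral.smul_integral_comp_mul_left (a := 0) (b := 1)
    (fun t ↦ t ^ (a - 1) • Complex.exp (-(A * t)) *
      (x - t) ^ (b - 1) • Complex.exp (-(B * ↑(x - t)))) x
  rw [mul_zero, mul_one] at h
  rw [← h, ← intervalIntegral.integral_smul]
  refine intervalIntegral.integral_congr fun s hs ↦ ?_
  rw [uIcc_of_le zero_le_one] at hs
  have hexp : Complex.exp (-((s * A + (1 - s) * B) * x)) =
      Complex.exp (-(A * ↑(x * s))) * Complex.exp (-(B * ↑(x - x * s))) := by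
    rw [← Complex.exp_add]
    push_cast
    ring_nf
  have hpow : x ^ (a + b - 1) = x * x ^ (a - 1) * x ^ (b - 1) := by
    rw [← Real.rpow_one_add' hx.le (by linarith), ← Real.rpow_add hx]
    ring_nf
  have hsub : x - x * s = x * (1 - s) := by ring
  simp only [hexp, hpow, hsub, Real.mul_rpow hx.le hs.1, Real.mul_rpow hx.le (sub_nonneg.2 hs.2),
    Complex.real_smul]
  push_cast
  ring

lemma integrable_prod_betaMeasure_rpow_smul_exp {a b : ℝ} {A B : ℂ} (ha : 0 < a) (hb : 0 < b)
    (hA : 0 < A.re) (hB : 0 < B.re) :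
    Integrable (fun q : ℝ × ℝ ↦ q.1 ^ (a + b - 1) •
        Complex.exp (-((q.2 * A + (1 - q.2) * B) * q.1)))
      ((volume.restrict (Ioi 0)).prod (betaMeasure a b)) := by
  have := isProbabilityMeasureBeta ha hb
  set δ := min A.re B.re
  have hδ : 0 < δ := lt_min hA hB
  refine ((integrableOn_rpow_mul_exp_neg_mul (add_pos ha hb) hδ).comp_fst
    (betaMeasure a b)).mono' (Measurable.aestronglyMeasurable (by fun_prop)) ?_
  filter_upwards [Measure.quasiMeasurePreserving_fst.ae (ae_restrict_mem measurableSet_Ioi),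
    Measure.quasiMeasurePreserving_snd.ae (ae_mem_Ioo_betaMeasure a b)] with q hx hs
  rw [norm_smul, Complex.norm_exp, Real.norm_of_nonneg (Real.rpow_nonneg (le_of_lt hx) _)]
  refine mul_le_mul_of_nonneg_left (Real.exp_le_exp.2 (neg_le_neg ?_))
    (Real.rpow_nonneg (le_of_lt hx) _)
  have hre : ((q.2 * A + (1 - q.2) * B) * q.1).re = (q.2 * A.re + (1 - q.2) * B.re) * q.1 := by
    simp
  rw [hre]
  refine mul_le_mul_of_nonneg_right ?_ (le_of_lt hx)
  nlinarith [hs.1, hs.2, min_le_left A.re B.re, min_le_right A.re B.re]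

lemma integral_rpow_smul_exp_mul_integral_rpow_smul_exp {a b : ℝ} (ha : 0 < a) (hb : 0 < b)
    {A B : ℂ} (hA : 0 < A.re) (hB : 0 < B.re) :
    (∫ t in Ioi (0 : ℝ), t ^ (a - 1) • Complex.exp (-(A * t))) *
        ∫ t in Ioi (0 : ℝ), t ^ (b - 1) • Complex.exp (-(B * t)) =
      beta a b • ∫ s : ℝ, (∫ x in Ioi (0 : ℝ), x ^ (a + b - 1) •
        Complex.exp (-((s * A + (1 - s) * B) * x))) ∂betaMeasure a b := by
  have := isProbabilityMeasureBeta ha hb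
  calc
    _ = ∫ x in Ioi (0 : ℝ), ∫ t in (0)..x, t ^ (a - 1) • Complex.exp (-(A * t)) *
        (x - t) ^ (b - 1) • Complex.exp (-(B * ↑(x - t))) :=
      (integral_posConvolution (integrableOn_rpow_smul_exp_neg_mul ha hA)
        (integrableOn_rpow_smul_exp_neg_mul hb hB) (ContinuousLinearMap.mul ℝ ℂ)).symm
    _ = ∫ x in Ioi (0 : ℝ), beta a b • ∫ s : ℝ, x ^ (a + b - 1) •
        Complex.exp (-((s * A + (1 - s) * B) * x)) ∂betaMeasure a b :=
      setIntegral_congr_fun measurableSet_Ioi fun x hx ↦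
        integral_rpow_smul_exp_mul_rpow_smul_exp_sub ha hb A B hx
    _ = _ := by
      rw [integral_smul,
        integral_integral_swap (integrable_prod_betaMeasure_rpow_smul_exp ha hb hA hB)]

lemma integral_betaMeasure_cpow {a b : ℝ} (ha : 0 < a) (hb : 0 < b) {A B : ℂ}
    (hA : 0 < A.re) (hB : 0 < B.re) :
    ∫ s : ℝ, (s * A + (1 - s) * B) ^ (-(a + b) : ℂ) ∂betaMeasure a b =
      A ^ (-a : ℂ) * B ^ (-b : ℂ) := by
  have hinner : ∀ᵐ s : ℝ ∂betaMeasure a b,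
      ∫ x in Ioi (0 : ℝ), x ^ (a + b - 1) • Complex.exp (-((s * A + (1 - s) * B) * x)) =
        Real.Gamma (a + b) * (s * A + (1 - s) * B) ^ (-(a + b) : ℂ) := by
    filter_upwards [ae_mem_Ioo_betaMeasure a b] with s hs
    have hre : 0 < (s * A + (1 - s) * B).re := by
      simpa using add_pos (mul_pos hs.1 hA) (mul_pos (sub_pos.2 hs.2) hB)
    simpa using integral_rpow_smul_exp_neg_mul (add_pos ha hb) hre
  have hprod := integral_rpow_smul_exp_mul_integral_rpow_smul_exp ha hb hA hB
  rw [integral_rpow_smul_exp_neg_mul ha hA, integral_rpow_smul_exp_neg_mul hb hB,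
    integral_congr_ae hinner, integral_const_mul, Complex.real_smul, mul_mul_mul_comm,
    ← Complex.ofReal_mul, ← mul_assoc (beta a b : ℂ), ← Complex.ofReal_mul, beta,
    div_mul_cancel₀ _ (Real.Gamma_pos_of_pos (add_pos ha hb)).ne'] at hprod
  exact (mul_left_cancel₀ (Complex.ofReal_ne_zero.2 (mul_pos (Real.Gamma_pos_of_pos ha)
    (Real.Gamma_pos_of_pos hb)).ne') hprod).symm

/-! ### Closed convex hulls of powers -/

lemma re_segment_pos {A B : ℂ} (hA : 0 < A.re) (hB : 0 < B.re) {s : ℝ}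
    (hs : s ∈ Icc (0 : ℝ) 1) : 0 < (s * A + (1 - s) * B).re := by
  have h := (convex_halfSpace_re_gt 0) hA hB hs.1 (sub_nonneg.2 hs.2) (by ring)
  simpa using h

section CpowHull

variable {X : Type*} [TopologicalSpace X]

/-- The closed convex hull of the functions `A ^ (-q)` with `A ∈ K`, in the uniform norm. The
powers are taken pointwise, with the principal branch. For `K` the affine functions `t ↦ 1 - t * u`,
these hulls contain the derivatives of convex functions restricted to a ray. -/
def cpowHull (K : Set C(X, ℂ)) (q : ℝ) : Set C(X, ℂ) :=
  closedConvexHull ℝ {F | ∃ A ∈ K, ∀ x, F x = A x ^ (-q : ℂ)}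

lemma convex_cpowHull (K : Set C(X, ℂ)) (q : ℝ) : Convex ℝ (cpowHull K q) :=
  convex_closedConvexHull

lemma isClosed_cpowHull (K : Set C(X, ℂ)) (q : ℝ) : IsClosed (cpowHull K q) :=
  isClosed_closedConvexHull

variable [CompactSpace X]

lemma mul_mem_cpowHull_of_forall_eq {K : Set C(X, ℂ)} (hK : Convex ℝ K)
    (hre : ∀ A ∈ K, ∀ x, 0 < (A x).re) {p q : ℝ} (hp : 0 < p) (hq : 0 < q)
    {A B F G : C(X, ℂ)} (hA : A ∈ K) (hB : B ∈ K) (hF : ∀ x, F x = A x ^ (-p : ℂ))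
    (hG : ∀ x, G x = B x ^ (-q : ℂ)) : F * G ∈ cpowHull K (p + q) := by
  have := isProbabilityMeasureBeta hp hq
  let σ : ℝ → ℝ := fun s ↦ projIcc 0 1 zero_le_one s
  have hσ : Continuous σ := continuous_subtype_val.comp continuous_projIcc
  have hσ_mem (s : ℝ) : σ s ∈ Icc (0 : ℝ) 1 := (projIcc 0 1 zero_le_one s).2
  have hcont : Continuous fun y : ℝ × X ↦
      (σ y.1 * A y.2 + (1 - σ y.1) * B y.2) ^ (-(p + q) : ℂ) := by
    refine Continuous.cpow (by fun_prop) continuous_const fun y ↦ Or.inl ?_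
    exact re_segment_pos (hre A hA y.2) (hre B hB y.2) (hσ_mem y.1)
  let Φ : C(ℝ, C(X, ℂ)) := ContinuousMap.curry ⟨_, hcont⟩
  have hΦ_apply (s : ℝ) (x : X) :
      Φ s x = (σ s * A x + (1 - σ s) * B x) ^ (-(p + q) : ℂ) := rfl
  have hΦ_mem (s : ℝ) : Φ s ∈ cpowHull K (p + q) := by
    refine subset_closedConvexHull ⟨σ s • A + (1 - σ s) • B,
      hK hA hB (hσ_mem s).1 (sub_nonneg.2 (hσ_mem s).2) (by ring), fun x ↦ ?_⟩
    simp [hΦ_apply]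
  have hΦ_int : Integrable Φ (betaMeasure p q) := by
    obtain ⟨C, hC⟩ := isCompact_Icc.exists_bound_of_continuousOn (s := Icc (0 : ℝ) 1)
      Φ.continuous.continuousOn
    refine Integrable.of_bound Φ.continuous.aestronglyMeasurable C ?_
    filter_upwards [ae_mem_Ioo_betaMeasure p q] with s hs using hC s (Ioo_subset_Icc_self hs)
  have hint : ∫ s, Φ s ∂betaMeasure p q = F * G := by
    ext x
    rw [ContinuousMap.integral_apply hΦ_int, ContinuousMap.mul_apply, hF, hG,
      ← integral_betaMeasure_cpow hp hq (hre A hA x) (hre B hB x)]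
    refine integral_congr_ae ?_
    filter_upwards [ae_mem_Ioo_betaMeasure p q] with s hs
    simp [hΦ_apply, σ, projIcc_of_mem zero_le_one (Ioo_subset_Icc_self hs)]
  rw [← hint]
  exact (convex_cpowHull K _).integral_mem (isClosed_cpowHull K _)
    (.of_forall hΦ_mem) hΦ_int

lemma mul_mem_cpowHull {K : Set C(X, ℂ)} (hK : Convex ℝ K)
    (hre : ∀ A ∈ K, ∀ x, 0 < (A x).re) {p q : ℝ} (hp : 0 < p) (hq : 0 < q)
    {F G : C(X, ℂ)} (hF : F ∈ cpowHull K p) (hG : G ∈ cpowHull K q) :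
    F * G ∈ cpowHull K (p + q) := by
  have hright : cpowHull K p ⊆ (LinearMap.mulRight ℝ G) ⁻¹' cpowHull K (p + q) := by
    refine closedConvexHull_min ?_ ((convex_cpowHull K _).linear_preimage _)
      ((isClosed_cpowHull K _).preimage (continuous_mul_const G))
    rintro F₀ ⟨A, hA, hF₀⟩
    have hleft : cpowHull K q ⊆ (LinearMap.mulLeft ℝ F₀) ⁻¹' cpowHull K (p + q) := by
      refine closedConvexHull_min ?_ ((convex_cpowHull K _).linear_preimage _)
        ((isClosed_cpowHull K _).preimage (continuous_const_mul F₀))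
      rintro G₀ ⟨B, hB, hG₀⟩
      exact mul_mem_cpowHull_of_forall_eq hK hre hp hq hA hB hF₀ hG₀
    exact hleft hG
  exact hright hF

lemma mem_cpowHull_of_forall_eq_exp {K : Set C(X, ℂ)} (hK : Convex ℝ K)
    (hre : ∀ A ∈ K, ∀ x, 0 < (A x).re) {v : C(X, ℂ)}
    (hv : v ∈ closedConvexHull ℝ {u : C(X, ℂ) | ∃ A ∈ K, ∀ x, u x = -Complex.log (A x)})
    {q : ℝ} (hq : 0 < q) {F : C(X, ℂ)} (hF : ∀ x, F x = Complex.exp (q * v x)) :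
    F ∈ cpowHull K q := by
  let expC : C(ℂ, ℂ) := ⟨Complex.exp, Complex.continuous_exp⟩
  let V : Set C(X, ℂ) := {v | ∀ q : ℝ, 0 < q → expC.comp (q • v) ∈ cpowHull K q}
  have hV_closed : IsClosed V := by
    simp only [V, ofPred_forall]
    exact isClosed_iInter fun q ↦ isClosed_iInter fun _ ↦ (isClosed_cpowHull K q).preimage
      (expC.continuous_postcomp.comp (continuous_const_smul q))
  have hV_convex : Convex ℝ V := by
    rw [convex_iff_forall_pos]
    intro u hu w hw a b ha hb hab q hq
    have h := mul_mem_cpowHull hK hre (mul_pos hq ha) (mul_pos hq hb) (hu _ (mul_pos hq ha))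
      (hw _ (mul_pos hq hb))
    rw [← mul_add, hab, mul_one] at h
    convert h using 1
    ext x
    simp [expC, Complex.exp_add, mul_assoc]
  have hV : closedConvexHull ℝ {u : C(X, ℂ) | ∃ A ∈ K, ∀ x, u x = -Complex.log (A x)} ⊆ V := by
    refine closedConvexHull_min ?_ hV_convex hV_closed
    rintro u ⟨A, hA, hu⟩ q -
    refine subset_closedConvexHull ⟨A, hA, fun x ↦ ?_⟩
    have hne : A x ≠ 0 := fun h ↦ by simpa [h] using hre A hA x
    simp [expC, hu, Complex.cpow_def_of_ne_zero hne, mul_comm]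
  convert hV hv q hq using 1
  ext x
  simp [expC, hF]

end CpowHull

/-! ### The Herglotz representation on a circle -/

lemma circleAverage_ofReal {g : ℂ → ℝ} {c : ℂ} {R : ℝ} (hg : CircleIntegrable g c R) :
    Real.circleAverage (fun ζ ↦ (g ζ : ℂ)) c R = Real.circleAverage g c R :=
  Complex.ofRealCLM.circleAverage_comp_comm hg

lemma re_circleAverage_herglotzRieszKernel_smul_re {Q : ℂ → ℂ} {R : ℝ} {w : ℂ}
    (hQ : DiffContOnCl ℂ Q (ball 0 R)) (hw : w ∈ ball 0 R) :
    (Real.circleAverage (fun ζ ↦ herglotzRieszKernel 0 w ζ • ((Q ζ).re : ℂ)) 0 R).re =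
      (Q w).re := by
  have hR : 0 < R := pos_of_mem_ball hw
  have hQ_cont : ContinuousOn Q (sphere 0 R) :=
    hQ.continuousOn_ball.mono sphere_subset_closedBall
  have hker_cont : ContinuousOn (Complex.re ∘ herglotzRieszKernel 0 w) (sphere 0 R) := by
    simpa only [abs_of_pos hR] using
      Complex.continuous_re.comp_continuousOn (continuousOn_herglotzRieszKernel_sphere hw)
  have hre_int : CircleIntegrable (fun ζ ↦ (Q ζ).re) 0 R :=
    (Complex.continuous_re.comp_continuousOn hQ_cont).circleIntegrable hR.le
  rw [re_circleAverage_herglotzRieszKernel_smul hre_int hw,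
    ← hQ.circleAverage_re_herglotzRieszKernel_smul hw]
  convert! Complex.reCLM.circleAverage_comp_comm
    ((hker_cont.smul hQ_cont).circleIntegrable hR.le) using 2
  ext ζ
  simp

lemma circleAverage_herglotzRieszKernel_smul_re {Q : ℂ → ℂ} {R : ℝ} {w : ℂ}
    (hQ : DiffContOnCl ℂ Q (ball 0 R)) (hw : w ∈ ball 0 R) :
    Real.circleAverage (fun ζ ↦ herglotzRieszKernel 0 w ζ • ((Q ζ).re : ℂ)) 0 R =
      Q w - (Q 0).im * Complex.I := by
  have hR : 0 < R := pos_of_mem_ball hw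
  have hre_int : CircleIntegrable (fun ζ ↦ (Q ζ).re) 0 R :=
    (Complex.continuous_re.comp_continuousOn
      (hQ.continuousOn_ball.mono sphere_subset_closedBall)).circleIntegrable hR.le
  set H : ℂ → ℂ := fun w ↦
    Real.circleAverage (fun ζ ↦ herglotzRieszKernel 0 w ζ • ((Q ζ).re : ℂ)) 0 R
  have hH : AnalyticOnNhd ℂ H (ball 0 R) :=
    analyticOnNhd_circleAverage_herglotzRieszKernel_smul
      ⟨Complex.ofRealCLM.integrable_comp hre_int.1, Complex.ofRealCLM.integrable_comp hre_int.2⟩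
  have hH0 : H 0 = Real.circleAverage (fun ζ ↦ (Q ζ).re) 0 R := by
    rw [← circleAverage_ofReal hre_int]
    refine Real.circleAverage_congr_sphere fun ζ hζ ↦ ?_
    have hζ0 : ζ ≠ 0 := ne_of_mem_sphere hζ (abs_pos.2 hR.ne').ne'
    simp [herglotzRieszKernel_def, hζ0]
  have hre (x : ℂ) (hx : x ∈ ball 0 R) : ((H - Q) x).re = 0 :=
    sub_eq_zero.2 (re_circleAverage_herglotzRieszKernel_smul_re hQ hx)
  obtain ⟨c, hc⟩ :=
    (hH.sub (hQ.differentiableOn.analyticOnNhd isOpen_ball)).eq_const_of_re_eq_const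
      hre isOpen_ball ((convex_ball (0 : ℂ) R).isConnected ⟨w, hw⟩)
  have hc_im : c.im = -(Q 0).im := by
    rw [← hc 0 (mem_ball_self hR), Pi.sub_apply, hH0]
    simp
  have hc_re : c.re = 0 := by rw [← hc w hw, hre w hw]
  have hc_eq : c = -((Q 0).im * Complex.I) := Complex.ext (by simp [hc_re]) (by simp [hc_im])
  rw [sub_eq_add_neg, ← hc_eq, ← hc w hw]
  simp [H]

lemma circleAverage_re_mul_div_sub {g : ℂ → ℂ} {R : ℝ} {w : ℂ}
    (hg : DifferentiableOn ℂ g (closedBall 0 R)) (hw : w ∈ ball 0 R) :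
    Real.circleAverage (fun ζ ↦ ((1 + 2 * ζ * g ζ).re : ℂ) * (w / (ζ - w))) 0 R = w * g w := by
  have hR : 0 < R := pos_of_mem_ball hw
  have hQ : DifferentiableOn ℂ (fun ζ ↦ 1 + 2 * ζ * g ζ) (closedBall 0 R) := by fun_prop
  have hQ' := hQ.diffContOnCl_ball Subset.rfl
  have hint {u : ℂ} (hu : u ∈ ball 0 R) : CircleIntegrable
      (fun ζ ↦ herglotzRieszKernel 0 u ζ • ((1 + 2 * ζ * g ζ).re : ℂ)) 0 R := by
    refine ContinuousOn.circleIntegrable hR.le (ContinuousOn.fun_smul ?_ ?_)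
    · simpa only [abs_of_pos hR] using continuousOn_herglotzRieszKernel_sphere hu
    · exact (Complex.continuous_ofReal.comp Complex.continuous_re).comp_continuousOn
        (hQ.continuousOn.mono sphere_subset_closedBall)
  have h0 := mem_ball_self (x := (0 : ℂ)) hR
  calc
    _ = Real.circleAverage (fun ζ ↦ (2⁻¹ : ℝ) •
        (herglotzRieszKernel 0 w ζ • ((1 + 2 * ζ * g ζ).re : ℂ) -
          herglotzRieszKernel 0 0 ζ • ((1 + 2 * ζ * g ζ).re : ℂ))) 0 R := by
      refine Real.circleAverage_congr_sphere fun ζ hζ ↦ ?_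
      have hζ0 : ζ ≠ 0 := ne_of_mem_sphere hζ (abs_pos.2 hR.ne').ne'
      have hζw : ζ - w ≠ 0 := sub_ne_zero.2 fun h ↦ by
        simp only [mem_sphere_zero_iff_norm, abs_of_pos hR] at hζ
        simp [← h, hζ] at hw
      simp only [herglotzRieszKernel_def, sub_zero, add_zero, div_self hζ0, smul_eq_mul,
        Complex.real_smul]
      push_cast
      field_simp
      ring
    _ = _ := by
      rw [Real.circleAverage_fun_smul, Real.circleAverage_fun_sub
        (hint hw) (hint h0), circleAverage_herglotzRieszKernel_smul_re hQ' hw,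
        circleAverage_herglotzRieszKernel_smul_re hQ' h0]
      simp only [Complex.real_smul, sub_sub_sub_cancel_right, mul_zero, zero_mul, add_zero]
      push_cast
      ring

lemma sub_ofReal_mul_ne_zero {s : ℝ} (hs : s ∈ Icc (0 : ℝ) 1) {w ζ : ℂ} (hw : ‖w‖ < ‖ζ‖) :
    ζ - s * w ≠ 0 := by
  refine sub_ne_zero.2 fun h ↦ hw.not_ge ?_
  rw [h, norm_mul, Complex.norm_of_nonneg hs.1]
  exact mul_le_of_le_one_left (norm_nonneg w) hs.2

lemma neg_log_one_sub_div_eq_integral {w ζ : ℂ} (hwζ : ‖w‖ < ‖ζ‖) :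
    -Complex.log (1 - w / ζ) = ∫ s in (0 : ℝ)..1, w / (ζ - s * w) := by
  have hζ : ζ ≠ 0 := norm_pos_iff.1 ((norm_nonneg w).trans_lt hwζ)
  have hlt : ‖w / ζ‖ < 1 := by rwa [norm_div, div_lt_one (norm_pos_iff.2 hζ)]
  have hslit : 1 - w / ζ ∈ Complex.slitPlane := by
    simpa [sub_eq_add_neg] using
      Complex.mem_slitPlane_of_norm_lt_one (z := -(w / ζ)) (by rwa [norm_neg])
  rw [← Complex.log_inv _ (Complex.slitPlane_arg_ne_pi hslit), Complex.log_inv_eq_integral hslit,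
    ← intervalIntegral.integral_const_mul]
  congr 1 with s
  rw [Complex.real_smul]
  field_simp

lemma continuousOn_circleMap_re_mul_div_sub {g : ℂ → ℂ} {R : ℝ} {w : ℂ}
    (hg : ContinuousOn g (sphere 0 R)) (hw : w ∈ ball 0 R) :
    ContinuousOn (fun q : ℝ × ℝ ↦ ((1 + 2 * circleMap 0 R q.2 * g (circleMap 0 R q.2)).re : ℂ) *
      (w / (circleMap 0 R q.2 - q.1 * w))) (Icc 0 1 ×ˢ univ) := by
  have hR : 0 < R := pos_of_mem_ball hw
  have hg' : Continuous fun q : ℝ × ℝ ↦ g (circleMap 0 R q.2) :=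
    hg.comp_continuous (by fun_prop) fun q ↦ circleMap_mem_sphere 0 hR.le q.2
  have hcircle : Continuous fun q : ℝ × ℝ ↦ circleMap 0 R q.2 := by fun_prop
  have hre : Continuous fun q : ℝ × ℝ ↦
      ((1 + 2 * circleMap 0 R q.2 * g (circleMap 0 R q.2)).re : ℂ) :=
    Complex.continuous_ofReal.comp <| Complex.continuous_re.comp <|
      continuous_const.add ((continuous_const.mul hcircle).mul hg')
  refine hre.continuousOn.mul (ContinuousOn.div (by fun_prop) (by fun_prop) ?_)
  rintro ⟨s, θ⟩ ⟨hs, -⟩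
  refine sub_ofReal_mul_ne_zero hs ?_
  simpa [abs_of_pos hR] using hw

lemma circleAverage_re_mul_neg_log {g : ℂ → ℂ} {R : ℝ} {w : ℂ}
    (hg : DifferentiableOn ℂ g (closedBall 0 R)) (hw : w ∈ ball 0 R) :
    Real.circleAverage (fun ζ ↦ ((1 + 2 * ζ * g ζ).re : ℂ) * -Complex.log (1 - w / ζ)) 0 R =
      ∫ s in (0 : ℝ)..1, w * g (s * w) := by
  have hR : 0 < R := pos_of_mem_ball hw
  set k : ℝ → ℂ → ℂ := fun s ζ ↦ ((1 + 2 * ζ * g ζ).re : ℂ) * (w / (ζ - s * w)) with hk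
  have hint : IntegrableOn (Function.uncurry fun s θ ↦ k s (circleMap 0 R θ))
      (uIcc 0 1 ×ˢ uIcc 0 (2 * Real.pi)) := by
    refine ContinuousOn.integrableOn_compact (isCompact_uIcc.prod isCompact_uIcc) ?_
    refine (continuousOn_circleMap_re_mul_div_sub
      (hg.continuousOn.mono sphere_subset_closedBall) hw).mono ?_
    rw [uIcc_of_le zero_le_one]
    exact prod_mono_right (subset_univ _)
  calc
    _ = Real.circleAverage (fun ζ ↦ ∫ s in (0 : ℝ)..1, k s ζ) 0 R := by
      refine Real.circleAverage_congr_sphere fun ζ hζ ↦ ?_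
      have hwζ : ‖w‖ < ‖ζ‖ := by
        rw [mem_sphere_zero_iff_norm.1 hζ, abs_of_pos hR]
        exact mem_ball_zero_iff.1 hw
      simp only [hk]
      rw [neg_log_one_sub_div_eq_integral hwζ, intervalIntegral.integral_const_mul]
    _ = ∫ s in (0 : ℝ)..1, Real.circleAverage (k s) 0 R := by
      simp only [Real.circleAverage_def]
      rw [intervalIntegral.integral_smul, intervalIntegral_intervalIntegral_swap
        (hint.mono_set (prod_mono uIoc_subset_uIcc uIoc_subset_uIcc))]
    _ = _ := by
      rw [intervalIntegral.integral_of_le zero_le_one, intervalIntegral.integral_of_le zero_le_one]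
      refine setIntegral_congr_fun measurableSet_Ioc fun s hs ↦ ?_
      have hs0 : (s : ℂ) ≠ 0 := Complex.ofReal_ne_zero.2 hs.1.ne'
      have hsw : s * w ∈ ball (0 : ℂ) R := by
        simpa using
          (convex_ball (0 : ℂ) R).smul_mem_of_zero_mem (mem_ball_self hR) hw ⟨hs.1.le, hs.2⟩
      have h := circleAverage_re_mul_div_sub hg hsw
      refine mul_left_cancel₀ hs0 ?_
      rw [← mul_assoc, ← h, ← smul_eq_mul, Complex.coe_smul, ← Real.circleAverage_fun_smul]
      congr 1 with ζ
      simp only [hk, Complex.real_smul]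
      ring

/-! ### The closed convex hull of the values of `h_α` -/

lemma integral_smul_mem_of_convex {X E : Type*} [MeasurableSpace X] {μ : Measure X}
    [NormedAddCommGroup E] [NormedSpace ℝ E] [CompleteSpace E] {s : Set E} (hs : Convex ℝ s)
    (hsc : IsClosed s) {ρ : X → ℝ} (hρ : Measurable ρ) (hρ_nonneg : ∀ x, 0 ≤ ρ x)
    (hρ_int : ∫ x, ρ x ∂μ = 1) {F : X → E} (hF : ∀ x, F x ∈ s)
    (hρF : Integrable (fun x ↦ ρ x • F x) μ) : ∫ x, ρ x • F x ∂μ ∈ s := by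
  set d : X → ENNReal := fun x ↦ ENNReal.ofReal (ρ x)
  have hd : Measurable d := hρ.ennreal_ofReal
  have hd_toReal (x : X) : (d x).toReal = ρ x := ENNReal.toReal_ofReal (hρ_nonneg x)
  have hρ_integrable : Integrable ρ μ :=
    Integrable.of_integral_ne_zero (hρ_int.symm ▸ one_ne_zero)
  have : IsProbabilityMeasure (μ.withDensity d) := ⟨by
    rw [withDensity_apply _ .univ, Measure.restrict_univ, ← ofReal_integral_eq_lintegral_ofReal
      hρ_integrable (.of_forall hρ_nonneg), hρ_int, ENNReal.ofReal_one]⟩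
  have h := hs.integral_mem hsc (μ := μ.withDensity d) (.of_forall hF) <| by
    rw [integrable_withDensity_iff_integrable_smul' hd (by simp [d])]
    simpa only [hd_toReal] using hρF
  simpa only [integral_withDensity_eq_integral_toReal_smul hd
    (show ∀ᵐ x ∂μ, d x < ⊤ by simp [d]), hd_toReal] using h

/-- The affine functions `t ↦ 1 - t * u` on the unit interval, with `‖u‖ ≤ r`: the bases of the
powers `k_α'(t * u) = (1 - t * u) ^ (-(2 - 2 * α))` along a ray. -/
def oneSubSegments (r : ℝ) : Set C(unitInterval, ℂ) :=
  {A | ∃ u ∈ closedBall (0 : ℂ) r, ∀ t : unitInterval, A t = 1 - (t : ℝ) * u}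

lemma convex_oneSubSegments (r : ℝ) : Convex ℝ (oneSubSegments r) := by
  rintro A ⟨u, hu, hA⟩ B ⟨v, hv, hB⟩ a b ha hb hab
  refine ⟨a • u + b • v, convex_closedBall 0 r hu hv ha hb hab, fun t ↦ ?_⟩
  have hab' : (a + b : ℂ) = 1 := mod_cast hab
  simp only [ContinuousMap.add_apply, ContinuousMap.smul_apply, Complex.real_smul, hA, hB]
  linear_combination hab'

lemma norm_unitInterval_mul_le (t : unitInterval) (u : ℂ) : ‖((t : ℝ) : ℂ) * u‖ ≤ ‖u‖ := by
  rw [norm_mul, Complex.norm_of_nonneg t.2.1]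
  exact mul_le_of_le_one_left (norm_nonneg u) t.2.2

lemma re_one_sub_pos {u : ℂ} (hu : ‖u‖ < 1) : 0 < (1 - u).re := by
  simpa using (Complex.re_le_norm u).trans_lt hu

lemma re_pos_of_mem_oneSubSegments {r : ℝ} (hr : r < 1) {A : C(unitInterval, ℂ)}
    (hA : A ∈ oneSubSegments r) (t : unitInterval) : 0 < (A t).re := by
  obtain ⟨u, hu, hA⟩ := hA
  rw [hA t]
  exact re_one_sub_pos (((norm_unitInterval_mul_le t u).trans
    (mem_closedBall_zero_iff.1 hu)).trans_lt hr)

lemma average_re_circleMap_smul_mem {E : Type*} [NormedAddCommGroup E] [NormedSpace ℝ E]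
    [CompleteSpace E] {s : Set E} (hs : Convex ℝ s) (hsc : IsClosed s) {Q : ℂ → ℂ} {R : ℝ}
    (hR : 0 ≤ R) (hQ : DifferentiableOn ℂ Q (closedBall 0 R)) (hQ_zero : (Q 0).re = 1)
    (hQ_re : ∀ ζ ∈ sphere (0 : ℂ) R, 0 ≤ (Q ζ).re) {Λ : ℝ → E} (hΛ : Continuous Λ)
    (hΛs : ∀ θ, Λ θ ∈ s) :
    (2 * Real.pi)⁻¹ • ∫ θ in (0)..(2 * Real.pi), (Q (circleMap 0 R θ)).re • Λ θ ∈ s := by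
  have hQ_sphere : ContinuousOn Q (sphere 0 R) := hQ.continuousOn.mono sphere_subset_closedBall
  have hQ_circle : Continuous fun θ ↦ (Q (circleMap 0 R θ)).re :=
    Complex.continuous_re.comp <| hQ_sphere.comp_continuous (continuous_circleMap 0 R)
      fun θ ↦ circleMap_mem_sphere 0 hR θ
  have hmean : Real.circleAverage (fun ζ ↦ (Q ζ).re) 0 R = 1 := by
    rw [← hQ_zero, ← (hQ.diffContOnCl_ball (by rw [abs_of_nonneg hR])).circleAverage]
    exact Complex.reCLM.circleAverage_comp_comm (hQ_sphere.circleIntegrable hR)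
  rw [intervalIntegral.integral_of_le Real.two_pi_pos.le, ← integral_smul]
  simp only [smul_smul]
  refine integral_smul_mem_of_convex hs hsc (hQ_circle.measurable.const_mul _) (fun θ ↦ ?_) ?_ hΛs
    (((continuous_const.mul hQ_circle).smul hΛ).continuousOn.integrableOn_Icc.mono_set
      Ioc_subset_Icc_self)
  · exact mul_nonneg (by positivity) (hQ_re _ (circleMap_mem_sphere 0 hR θ))
  · rw [← hmean, Real.circleAverage_def, intervalIntegral.integral_of_le Real.two_pi_pos.le,
      ← integral_smul]
    rfl

lemma exists_mem_closedConvexHull_neg_log {g : ℂ → ℂ} {R : ℝ} {w : ℂ}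
    (hg : DifferentiableOn ℂ g (closedBall 0 R)) (hw : w ∈ ball 0 R)
    (hre : ∀ ζ ∈ sphere (0 : ℂ) R, 0 ≤ (1 + 2 * ζ * g ζ).re) :
    ∃ v ∈ closedConvexHull ℝ {u : C(unitInterval, ℂ) |
        ∃ A ∈ oneSubSegments (‖w‖ / R), ∀ t, u t = -Complex.log (A t)},
      ∀ t : unitInterval, v t = ∫ s in (0 : ℝ)..1, (t : ℝ) * w * g (s * ((t : ℝ) * w)) := by
  have hR : 0 < R := pos_of_mem_ball hw
  have hQ : DifferentiableOn ℂ (fun ζ ↦ 1 + 2 * ζ * g ζ) (closedBall 0 R) := by fun_prop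
  have hnorm (θ : ℝ) : ‖w / circleMap 0 R θ‖ = ‖w‖ / R := by simp [abs_of_pos hR]
  have hlog : Continuous fun q : ℝ × unitInterval ↦
      -Complex.log (1 - (q.2 : ℝ) * (w / circleMap 0 R q.1)) := by
    refine (Continuous.clog (by fun_prop (disch := simp [hR.ne'])) fun q ↦ Or.inl ?_).neg
    refine re_one_sub_pos ((norm_unitInterval_mul_le q.2 _).trans_lt ?_)
    rw [hnorm, div_lt_one hR]
    exact mem_ball_zero_iff.1 hw
  let Λ : C(ℝ, C(unitInterval, ℂ)) := ContinuousMap.curry ⟨_, hlog⟩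
  have hint : IntegrableOn (fun θ ↦ (1 + 2 * circleMap 0 R θ * g (circleMap 0 R θ)).re • Λ θ)
      (Ioc 0 (2 * Real.pi)) := by
    refine Continuous.integrableOn_Ioc (Continuous.fun_smul ?_ Λ.continuous)
    exact Complex.continuous_re.comp <| hQ.continuousOn.comp_continuous (continuous_circleMap 0 R)
      fun θ ↦ sphere_subset_closedBall (circleMap_mem_sphere 0 hR.le θ)
  refine ⟨_, average_re_circleMap_smul_mem convex_closedConvexHull isClosed_closedConvexHull
    hR.le hQ (by simp) hre Λ.continuous fun θ ↦ subset_closedConvexHull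
      ⟨⟨fun t ↦ 1 - (t : ℝ) * (w / circleMap 0 R θ), by fun_prop⟩,
        ⟨_, mem_closedBall_zero_iff.2 (hnorm θ).le, fun t ↦ rfl⟩, fun t ↦ rfl⟩, fun t ↦ ?_⟩
  have htw : (t : ℝ) * w ∈ ball (0 : ℂ) R :=
    mem_ball_zero_iff.2 ((norm_unitInterval_mul_le t w).trans_lt (mem_ball_zero_iff.1 hw))
  rw [← circleAverage_re_mul_neg_log hg htw, Real.circleAverage_def, ContinuousMap.smul_apply,
    intervalIntegral.integral_of_le Real.two_pi_pos.le,
    intervalIntegral.integral_of_le Real.two_pi_pos.le, ContinuousMap.integral_apply hint]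
  simp only [ContinuousMap.smul_apply, Complex.real_smul, mul_div_assoc]
  rfl

lemma sub_eq_mul_integral_of_hasDerivAt {F F' : ℂ → ℂ} {s : Set ℂ} (hs : StarConvex ℝ 0 s)
    (hF : ∀ z ∈ s, HasDerivAt F (F' z) z) (hF' : ContinuousOn F' s) {w : ℂ} (hw : w ∈ s) :
    F w - F 0 = w * ∫ t in (0 : ℝ)..1, F' (t * w) := by
  have hmem (t : ℝ) (ht : t ∈ Icc (0 : ℝ) 1) : 0 + t • w ∈ s := hs.add_smul_mem (by simpa) ht.1 ht.2
  have h := intervalIntegral.integral_unitInterval_deriv_eq_sub (f := F)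
    (hF'.comp (by fun_prop) hmem) fun t ht ↦ hF _ (hmem t ht)
  simpa only [zero_add, smul_eq_mul, Complex.real_smul] using h.symm

lemma eq_exp_integral_logDeriv {F : ℂ → ℂ} {R : ℝ} {w : ℂ} (hF : DifferentiableOn ℂ F (ball 0 R))
    (hF_ne : ∀ z ∈ ball 0 R, F z ≠ 0) (hF_zero : F 0 = 1) (hw : w ∈ ball 0 R) :
    F w = Complex.exp (∫ s in (0 : ℝ)..1, w * logDeriv F (s * w)) := by
  have hlog : DifferentiableOn ℂ (logDeriv F) (ball 0 R) := (hF.deriv isOpen_ball).div hF hF_ne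
  obtain ⟨V, hV_zero, hV⟩ := hlog.isExactOn_ball.with_val_at 0 0
  have hexp (z : ℂ) (hz : z ∈ ball 0 R) := (hV z hz).cexp
  have heq : EqOn (logDeriv F) (logDeriv fun z ↦ Complex.exp (V z)) (ball 0 R) := fun z hz ↦ by
    rw [logDeriv_apply (fun z ↦ Complex.exp (V z)), (hexp z hz).deriv,
      mul_div_cancel_left₀ _ (Complex.exp_ne_zero _)]
  obtain ⟨c, -, hc⟩ := (logDeriv_eqOn_iff hF
    (fun z hz ↦ (hexp z hz).differentiableAt.differentiableWithinAt) isOpen_ball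
    (convex_ball (0 : ℂ) R).isPreconnected (fun _ _ ↦ Complex.exp_ne_zero _) hF_ne).1 heq
  have hc_one : c = 1 := by
    simpa [hF_zero, hV_zero] using (hc (mem_ball_self (pos_of_mem_ball hw))).symm
  have hV_eq := sub_eq_mul_integral_of_hasDerivAt ((convex_ball 0 R).starConvex
    (mem_ball_self (pos_of_mem_ball hw))) hV hlog.continuousOn hw
  rw [hV_zero, sub_zero] at hV_eq
  rw [intervalIntegral.integral_const_mul, ← hV_eq, hc hw, hc_one, one_smul]

lemma IsConvexOfOrder.re_one_add_mul_logDeriv_deriv_nonneg {α : ℝ} {f : ℂ → ℂ}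
    (hf : IsConvexOfOrder α f) (hα : α < 1) {ζ : ℂ} (hζ : ζ ∈ unitDisk) :
    0 ≤ (1 + 2 * ζ * (logDeriv (deriv f) ζ / (2 - 2 * α : ℝ))).re := by
  have h := (hf.2.2.2 ζ hζ).2
  have hα' : ((1 - α : ℝ) : ℂ) ≠ 0 := Complex.ofReal_ne_zero.2 (by linarith)
  have heq : 1 + 2 * ζ * (logDeriv (deriv f) ζ / (2 - 2 * α : ℝ)) =
      ((1 + ζ * deriv (deriv f) ζ / deriv f ζ) - (α : ℝ)) / (1 - α : ℝ) := by
    rw [logDeriv_apply, show 2 - 2 * α = 2 * (1 - α) by ring]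
    push_cast at hα' ⊢
    field_simp
    ring
  rw [heq, Complex.div_ofReal_re, Complex.sub_re, Complex.ofReal_re]
  exact div_nonneg (by linarith) (by linarith)

lemma IsConvexOfOrder.exists_mem_cpowHull {α : ℝ} {f : ℂ → ℂ} (hf : IsConvexOfOrder α f)
    (hα : α < 1) {z : ℂ} {R : ℝ} (hz : z ∈ ball 0 R) (hR : R < 1) :
    ∃ F ∈ cpowHull (oneSubSegments (‖z‖ / R)) (2 - 2 * α),
      ∀ t : unitInterval, F t = deriv f ((t : ℝ) * z) := by
  have hq : 0 < 2 - 2 * α := by linarith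
  have hsub : closedBall (0 : ℂ) R ⊆ unitDisk := closedBall_subset_ball hR
  have hf' : DifferentiableOn ℂ (deriv f) unitDisk := hf.1.deriv isOpen_ball
  have hf'_ne (ζ : ℂ) (hζ : ζ ∈ unitDisk) : deriv f ζ ≠ 0 := (hf.2.2.2 ζ hζ).1
  set g : ℂ → ℂ := fun ζ ↦ logDeriv (deriv f) ζ / (2 - 2 * α : ℝ)
  have hg : DifferentiableOn ℂ g (closedBall 0 R) :=
    (((hf'.deriv isOpen_ball).div hf' hf'_ne).div_const _).mono hsub
  obtain ⟨v, hv, hv_eq⟩ := exists_mem_closedConvexHull_neg_log hg hz fun ζ hζ ↦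
    hf.re_one_add_mul_logDeriv_deriv_nonneg hα (hsub (sphere_subset_closedBall hζ))
  have hmem (t : unitInterval) : (t : ℝ) * z ∈ unitDisk := mem_ball_zero_iff.2 <|
    (norm_unitInterval_mul_le t z).trans_lt ((mem_ball_zero_iff.1 hz).trans hR)
  have hre (A) (hA : A ∈ oneSubSegments (‖z‖ / R)) (t : unitInterval) : 0 < (A t).re :=
    re_pos_of_mem_oneSubSegments
      ((div_lt_one (pos_of_mem_ball hz)).2 (mem_ball_zero_iff.1 hz)) hA t
  refine ⟨⟨fun t : unitInterval ↦ deriv f ((t : ℝ) * z),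
    hf'.continuousOn.comp_continuous (by fun_prop) hmem⟩, ?_, fun t ↦ rfl⟩
  refine mem_cpowHull_of_forall_eq_exp (convex_oneSubSegments _) hre hv hq fun t ↦ ?_
  have hq' : ((2 - 2 * α : ℝ) : ℂ) ≠ 0 := Complex.ofReal_ne_zero.2 hq.ne'
  rw [ContinuousMap.coe_mk, eq_exp_integral_logDeriv hf' hf'_ne hf.2.2.1 (hmem t), hv_eq,
    ← intervalIntegral.integral_const_mul]
  congr 2 with s
  simp only [g]
  rw [mul_left_comm (((2 - 2 * α : ℝ) : ℂ)), mul_div_cancel₀ _ hq']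

lemma hasDerivAt_kfun (α : ℝ) {u : ℂ} (hu : 1 - u ∈ Complex.slitPlane) :
    HasDerivAt (kfun α) ((1 - u) ^ (-(2 - 2 * α : ℝ) : ℂ)) u := by
  have hsub := (hasDerivAt_id' u).const_sub 1
  rcases eq_or_ne α (1 / 2) with rfl | hα
  · rw [show kfun (1 / 2) = fun u ↦ -Complex.log (1 - u) from funext fun u ↦ if_pos rfl]
    refine (hsub.clog hu).neg.congr_deriv ?_
    norm_num [Complex.cpow_neg_one, neg_div]
  · rw [show kfun α = fun u ↦ ((1 - u) ^ ((2 * α - 1 : ℝ) : ℂ) - 1) / ((1 - 2 * α : ℝ) : ℂ) from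
      funext fun u ↦ if_neg hα]
    refine (((hsub.cpow_const hu).sub_const 1).div_const _).congr_deriv ?_
    have hα' : ((1 - 2 * α : ℝ) : ℂ) ≠ 0 := Complex.ofReal_ne_zero.2 fun h ↦ hα (by linarith)
    have hexp : ((2 * α - 1 : ℝ) : ℂ) - 1 = -(2 - 2 * α : ℝ) := by
      push_cast
      ring
    rw [hexp, div_eq_iff hα']
    push_cast
    ring

lemma kfun_zero (α : ℝ) : kfun α 0 = 0 := by
  unfold kfun
  split_ifs <;> simp

lemma starConvex_one_sub_mem_slitPlane :
    StarConvex ℝ 0 {u : ℂ | 1 - u ∈ Complex.slitPlane} := by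
  intro u hu a b ha hb hab
  have heq : 1 - (a • 0 + b • u) = a • 1 + b • (1 - u) := by
    rw [smul_zero, zero_add, smul_sub, ← add_sub_assoc, ← add_smul, hab, one_smul]
  rw [mem_ofPred_eq, heq]
  exact Complex.starConvex_one_slitPlane hu ha hb hab

lemma hfun_eq_integral (α : ℝ) {u : ℂ} (hu : 1 - u ∈ Complex.slitPlane) :
    hfun α u = ∫ t in (0 : ℝ)..1, (1 - t * u) ^ (-(2 - 2 * α : ℝ) : ℂ) := by
  rcases eq_or_ne u 0 with rfl | hu0
  · simp [hfun]
  have h := sub_eq_mul_integral_of_hasDerivAt starConvex_one_sub_mem_slitPlane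
    (fun z hz ↦ hasDerivAt_kfun α hz) (ContinuousOn.cpow (by fun_prop) (by fun_prop) fun z hz ↦ hz)
    hu
  rw [hfun, if_neg hu0, ← sub_zero (kfun α u), ← kfun_zero α, h, mul_div_cancel_left₀ _ hu0]

lemma one_sub_mem_slitPlane {u : ℂ} (hu : u ∈ unitDisk) : 1 - u ∈ Complex.slitPlane :=
  Or.inl (re_one_sub_pos (mem_ball_zero_iff.1 hu))

/-- The mean value of a continuous function on the unit interval, as a continuous linear map;
it sends `t ↦ f'(t * z)` to `f(z) / z`. -/
noncomputable def meanCLM : C(unitInterval, ℂ) →L[ℝ] ℂ :=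
  L1.integralCLM.comp (ContinuousMap.toLp (E := ℂ) 1 volume ℝ)

lemma meanCLM_eq_intervalIntegral {F : C(unitInterval, ℂ)} {φ : ℝ → ℂ}
    (hF : ∀ t : unitInterval, F t = φ t) : meanCLM F = ∫ t in (0 : ℝ)..1, φ t := by
  rw [meanCLM, ContinuousLinearMap.comp_apply, ← L1.integral_eq, L1.integral_eq_integral,
    integral_congr_ae (ContinuousMap.coeFn_toLp volume F),
    intervalIntegral.integral_of_le zero_le_one, ← integral_Icc_eq_integral_Ioc,
    ← integral_subtype measurableSet_Icc]
  exact integral_congr_ae (.of_forall hF)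

lemma meanCLM_mem_of_mem_cpowHull {α r : ℝ} (hr : r < 1) {F : C(unitInterval, ℂ)}
    (hF : F ∈ cpowHull (oneSubSegments r) (2 - 2 * α)) :
    meanCLM F ∈ closedConvexHull ℝ (hfun α '' closedBall 0 r) := by
  suffices h : cpowHull (oneSubSegments r) (2 - 2 * α) ⊆
      meanCLM ⁻¹' closedConvexHull ℝ (hfun α '' closedBall 0 r) from h hF
  refine closedConvexHull_min ?_ (convex_closedConvexHull.linear_preimage meanCLM.toLinearMap)
    (isClosed_closedConvexHull.preimage meanCLM.continuous)
  rintro F ⟨A, ⟨u, hu, hA⟩, hF⟩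
  refine subset_closedConvexHull ⟨u, hu, ?_⟩
  rw [hfun_eq_integral α (one_sub_mem_slitPlane (closedBall_subset_ball hr hu))]
  exact (meanCLM_eq_intervalIntegral fun t ↦ by rw [hF, hA]).symm

theorem IsConvexOfOrder.div_mem_closedConvexHull {α : ℝ} {f : ℂ → ℂ} (hf : IsConvexOfOrder α f)
    (hα : α < 1) {z : ℂ} {R : ℝ} (hz : z ∈ ball 0 R) (hz0 : z ≠ 0) (hR : R < 1) :
    f z / z ∈ closedConvexHull ℝ (hfun α '' closedBall 0 (‖z‖ / R)) := by
  obtain ⟨F, hF, hF_eq⟩ := hf.exists_mem_cpowHull hα hz hR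
  have hmean : f z / z = meanCLM F := by
    have hderiv (ζ : ℂ) (hζ : ζ ∈ unitDisk) : HasDerivAt f (deriv f ζ) ζ :=
      (hf.1.differentiableAt (isOpen_ball.mem_nhds hζ)).hasDerivAt
    have h := sub_eq_mul_integral_of_hasDerivAt ((convex_ball (0 : ℂ) 1).starConvex
      (mem_ball_self zero_lt_one)) hderiv (hf.1.deriv isOpen_ball).continuousOn
      (ball_subset_ball hR.le hz)
    rw [hf.2.1, sub_zero] at h
    rw [h, mul_div_cancel_left₀ _ hz0]
    exact (meanCLM_eq_intervalIntegral hF_eq).symm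
  rw [hmean]
  exact meanCLM_mem_of_mem_cpowHull
    ((div_lt_one (pos_of_mem_ball hz)).2 (mem_ball_zero_iff.1 hz)) hF

lemma hfun_eq_dslope (α : ℝ) : hfun α = dslope (kfun α) 0 := by
  ext u
  rcases eq_or_ne u 0 with rfl | hu
  · rw [dslope_same, (hasDerivAt_kfun α (by simp)).deriv, hfun, if_pos rfl, sub_zero,
      Complex.one_cpow]
  · rw [dslope_of_ne _ hu, hfun, if_neg hu, slope_def_field, kfun_zero, sub_zero, sub_zero]

lemma differentiableOn_hfun (α : ℝ) : DifferentiableOn ℂ (hfun α) unitDisk := by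
  rw [hfun_eq_dslope, unitDisk, Complex.differentiableOn_dslope (ball_mem_nhds 0 zero_lt_one)]
  exact fun u hu ↦
    (hasDerivAt_kfun α (one_sub_mem_slitPlane hu)).differentiableAt.differentiableWithinAt

theorem IsConvexOfOrder.abs_im_div_lt {α : ℝ} {f : ℂ → ℂ} (hf : IsConvexOfOrder α f) (hα : α < 1)
    {M : ℝ} (hM : ∀ u ∈ unitDisk, |(hfun α u).im| < M) {z : ℂ} (hz : z ∈ unitDisk)
    (hz0 : z ≠ 0) : |(f z / z).im| < M := by
  obtain ⟨R, hzR, hR⟩ := exists_between (mem_ball_zero_iff.1 hz)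
  have hR0 : 0 < R := (norm_nonneg z).trans_lt hzR
  have hsub : closedBall (0 : ℂ) (‖z‖ / R) ⊆ unitDisk :=
    closedBall_subset_ball ((div_lt_one hR0).2 hzR)
  obtain ⟨u, hu, hmax⟩ := (isCompact_closedBall (0 : ℂ) (‖z‖ / R)).exists_isMaxOn
    ⟨0, mem_closedBall_self (by positivity)⟩
    (Complex.continuous_im.comp_continuousOn ((differentiableOn_hfun α).continuousOn.mono hsub)).abs
  have hhull : closedConvexHull ℝ (hfun α '' closedBall 0 (‖z‖ / R)) ⊆
      Complex.imCLM ⁻¹' Icc (-|(hfun α u).im|) |(hfun α u).im| :=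
    closedConvexHull_min (image_subset_iff.2 fun v hv ↦ abs_le.1 (hmax hv))
      ((convex_Icc _ _).linear_preimage Complex.imCLM.toLinearMap)
      (isClosed_Icc.preimage Complex.continuous_im)
  have hmem := hf.div_mem_closedConvexHull hα (mem_ball_zero_iff.2 hzR) hz0 hR
  exact (abs_le.2 (hhull hmem)).trans_lt (hM u (hsub hu))

/-! ### Bounds for `Im h_α` -/

lemma arg_one_sub_ne_pi {w : ℂ} (hw : ‖w‖ ≤ 1) : (1 - w).arg ≠ Real.pi := fun h ↦
  (Complex.arg_eq_pi_iff.1 h).1.not_ge (by simpa using (Complex.re_le_norm w).trans hw)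

lemma hfun_conj (α : ℝ) {w : ℂ} (hw : (1 - w).arg ≠ Real.pi) :
    hfun α (starRingEnd ℂ w) = starRingEnd ℂ (hfun α w) := by
  have hconj : 1 - starRingEnd ℂ w = starRingEnd ℂ (1 - w) := by simp
  unfold hfun kfun
  rw [hconj, Complex.log_conj _ hw, Complex.conj_cpow _ _ hw, Complex.conj_ofReal]
  simp only [map_eq_zero]
  split_ifs <;> simp only [map_one, map_neg, map_sub, map_div₀, Complex.conj_ofReal]

lemma im_cpow_neg_pos {z : ℂ} (hz : z.im < 0) {q : ℝ} (hq : 0 < q) (hq_one : q ≤ 1) :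
    0 < (z ^ (-q : ℂ)).im := by
  have hz0 : z ≠ 0 := fun h ↦ by simp [h] at hz
  have harg_neg : z.arg < 0 := Complex.arg_neg_iff.2 hz
  have harg_gt : -Real.pi < z.arg := Complex.neg_pi_lt_arg z
  have him : (Complex.log z * -q).im = q * -z.arg := by
    rw [← Complex.ofReal_neg, Complex.im_mul_ofReal, Complex.log_im]
    ring
  rw [Complex.cpow_def_of_ne_zero hz0, Complex.exp_im, him]
  refine mul_pos (Real.exp_pos _) (Real.sin_pos_of_pos_of_lt_pi ?_ ?_) <;> nlinarith

lemma continuousOn_one_sub_mul_cpow (c : ℂ) {u : ℂ} (hu : 1 - u ∈ Complex.slitPlane) :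
    ContinuousOn (fun t : ℝ ↦ (1 - t * u) ^ c) (Icc 0 1) := by
  refine ContinuousOn.cpow (by fun_prop) (by fun_prop) fun t ht ↦ ?_
  simpa using starConvex_one_sub_mem_slitPlane.smul_mem hu ht.1 ht.2

lemma im_hfun_pos {α : ℝ} (hα0 : 1 / 2 ≤ α) (hα1 : α < 1) {w : ℂ} (hw : 0 < w.im) :
    0 < (hfun α w).im := by
  have hslit : 1 - w ∈ Complex.slitPlane := Or.inr (by simpa using hw.ne')
  have hcont := continuousOn_one_sub_mul_cpow (-(2 - 2 * α : ℝ) : ℂ) hslit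
  have hint := hcont.intervalIntegrable_of_Icc (μ := volume) zero_le_one
  have him := Complex.imCLM.intervalIntegral_comp_comm hint
  rw [hfun_eq_integral α hslit, ← Complex.imCLM_apply, ← him]
  refine intervalIntegral.intervalIntegral_pos_of_pos_on
    (Complex.imCLM.continuous.comp_continuousOn hcont |>.intervalIntegrable_of_Icc zero_le_one)
    (fun t ht ↦ im_cpow_neg_pos ?_ (by linarith) (by linarith)) zero_lt_one
  simpa using mul_pos ht.1 hw

lemma im_hfun_nonpos {α : ℝ} (hα0 : 1 / 2 ≤ α) (hα1 : α < 1) {w : ℂ} (hw : ‖w‖ ≤ 1)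
    (him : w.im ≤ 0) : (hfun α w).im ≤ 0 := by
  have hconj := congrArg Complex.im (hfun_conj α (arg_one_sub_ne_pi hw))
  rw [Complex.conj_im] at hconj
  rcases him.lt_or_eq with hneg | hzero
  · have := im_hfun_pos hα0 hα1 (w := starRingEnd ℂ w) (by simpa using hneg)
    linarith
  · rw [Complex.conj_eq_iff_im.2 hzero] at hconj
    linarith

lemma abs_im_hfun_lt_of_forall_im_hfun_lt {α M : ℝ} (hM : ∀ u ∈ unitDisk, (hfun α u).im < M)
    {u : ℂ} (hu : u ∈ unitDisk) : |(hfun α u).im| < M := by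
  have hu_norm := mem_ball_zero_iff.1 hu
  have hconj := hM (starRingEnd ℂ u) (mem_ball_zero_iff.2 (by simpa using hu_norm))
  rw [hfun_conj α (arg_one_sub_ne_pi hu_norm.le), Complex.conj_im] at hconj
  exact abs_lt.2 ⟨by linarith, hM u hu⟩

lemma im_hfun_half_le_im_kfun_half {u : ℂ} (hu : 0 < u.im) :
    (hfun (1 / 2) u).im ≤ (kfun (1 / 2) u).im := by
  have hu0 : u ≠ 0 := fun h ↦ by simp [h] at hu
  have hslit : 1 - u ∈ Complex.slitPlane := Or.inr (by simpa using hu.ne')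
  have hcont : ContinuousOn (fun t : ℝ ↦ (1 - t * u)⁻¹) (Icc 0 1) := by
    simpa only [Complex.cpow_neg_one] using continuousOn_one_sub_mul_cpow (-1) hslit
  have hk : kfun (1 / 2) u = u * hfun (1 / 2) u := by rw [hfun, if_neg hu0, mul_div_cancel₀ _ hu0]
  have hh : hfun (1 / 2) u = ∫ t in (0 : ℝ)..1, (1 - t * u)⁻¹ := by
    rw [hfun_eq_integral _ hslit]
    norm_num [Complex.cpow_neg_one]
  have him := Complex.imCLM.intervalIntegral_comp_comm
    ((hcont.const_mul (u - 1)).intervalIntegrable_of_Icc (μ := volume) zero_le_one)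
  have hnonneg (t : ℝ) (ht : t ∈ Icc (0 : ℝ) 1) : 0 ≤ ((u - 1) * (1 - t * u)⁻¹).im := by
    have heq : ((u - 1) * (1 - t * u)⁻¹).im = (1 - t) * u.im / Complex.normSq (1 - t * u) := by
      simp only [Complex.mul_im, Complex.mul_re, Complex.inv_re, Complex.inv_im, Complex.sub_re,
        Complex.sub_im, Complex.one_re, Complex.one_im, Complex.ofReal_re, Complex.ofReal_im,
        zero_mul, add_zero, zero_sub, neg_neg, sub_zero]
      ring
    rw [heq]
    exact div_nonneg (mul_nonneg (sub_nonneg.2 ht.2) hu.le) (Complex.normSq_nonneg _)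
  have h := intervalIntegral.integral_nonneg (μ := volume) zero_le_one hnonneg
  rw [← sub_nonneg, ← Complex.sub_im, hk, ← sub_one_mul, hh, ← intervalIntegral.integral_const_mul]
  exact h.trans_eq him

lemma im_hfun_half_lt {u : ℂ} (hu : u ∈ unitDisk) : (hfun (1 / 2) u).im < Real.pi / 2 := by
  have hu_norm := mem_ball_zero_iff.1 hu
  rcases lt_or_ge 0 u.im with him | him
  · refine (im_hfun_half_le_im_kfun_half him).trans_lt ?_
    have harg := Complex.abs_arg_lt_pi_div_two_iff.2 (Or.inl (re_one_sub_pos hu_norm))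
    rw [kfun, if_pos rfl, Complex.neg_im, Complex.log_im]
    linarith [neg_abs_le (1 - u).arg]
  · exact (im_hfun_nonpos le_rfl one_half_lt_one hu_norm.le him).trans_lt (by positivity)

lemma IsConvexOfOrder.mono {α β : ℝ} (hαβ : α ≤ β) {f : ℂ → ℂ} (hf : IsConvexOfOrder β f) :
    IsConvexOfOrder α f :=
  ⟨hf.1, hf.2.1, hf.2.2.1, fun z hz ↦ (hf.2.2.2 z hz).imp_right hαβ.trans_lt⟩

lemma re_one_add_div_one_sub_pos {z : ℂ} (hz : z ∈ unitDisk) : 0 < ((1 + z) / (1 - z)).re := by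
  have hne : 1 - z ≠ 0 := Complex.slitPlane_ne_zero (one_sub_mem_slitPlane hz)
  have heq : ((1 + z) / (1 - z)).re = (1 - Complex.normSq z) / Complex.normSq (1 - z) := by
    rw [Complex.div_re, Complex.normSq_apply z]
    simp only [Complex.add_re, Complex.add_im, Complex.sub_re, Complex.sub_im, Complex.one_re,
      Complex.one_im, zero_add, zero_sub, mul_neg]
    ring
  rw [heq, Complex.normSq_eq_norm_sq z]
  have hz_norm := mem_ball_zero_iff.1 hz
  exact div_pos (by nlinarith [norm_nonneg z]) (Complex.normSq_pos.2 hne)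

lemma isConvexOfOrder_kfun {α : ℝ} (hα : α < 1) : IsConvexOfOrder α (kfun α) := by
  have hderiv (z : ℂ) (hz : z ∈ unitDisk) := hasDerivAt_kfun α (one_sub_mem_slitPlane hz)
  refine ⟨fun z hz ↦ (hderiv z hz).differentiableAt.differentiableWithinAt, kfun_zero α, ?_,
    fun z hz ↦ ?_⟩
  · simpa using (hderiv 0 (mem_ball_self zero_lt_one)).deriv
  have hslit : 1 - z ∈ Complex.slitPlane := one_sub_mem_slitPlane hz
  have hne : 1 - z ≠ 0 := Complex.slitPlane_ne_zero hslit
  have hpow_ne : (1 - z) ^ (-(2 - 2 * α : ℝ) : ℂ) ≠ 0 := by simp [Complex.cpow_eq_zero_iff, hne]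
  have hderiv_eq : deriv (kfun α) =ᶠ[nhds z] fun u ↦ (1 - u) ^ (-(2 - 2 * α : ℝ) : ℂ) :=
    eventually_of_mem (isOpen_ball.mem_nhds hz) fun u hu ↦ (hderiv u hu).deriv
  have hpow_deriv := (((hasDerivAt_id' z).const_sub 1).cpow_const
    (c := -(2 - 2 * α : ℝ)) hslit).deriv
  have heq : 1 + z * deriv (deriv (kfun α)) z / deriv (kfun α) z =
      (α : ℝ) + (1 - α : ℝ) * ((1 + z) / (1 - z)) := by
    rw [hderiv_eq.deriv_eq, hderiv_eq.eq_of_nhds, hpow_deriv, Complex.cpow_sub _ _ hne,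
      Complex.cpow_one]
    generalize (1 - z) ^ (-(2 - 2 * α : ℝ) : ℂ) = P at *
    push_cast
    field_simp
    ring
  refine ⟨hderiv_eq.eq_of_nhds ▸ hpow_ne, ?_⟩
  rw [heq, Complex.add_re, Complex.ofReal_re, Complex.re_ofReal_mul]
  linarith [mul_pos (sub_pos.2 hα) (re_one_add_div_one_sub_pos hz)]

lemma im_hfun_le_pi_div_two {α : ℝ} (hα0 : 1 / 2 ≤ α) (hα1 : α < 1) {u : ℂ} (hu : u ∈ unitDisk) :
    (hfun α u).im ≤ Real.pi / 2 := by
  rcases eq_or_ne u 0 with rfl | hu0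
  · simpa [hfun] using Real.pi_div_two_pos.le
  rw [hfun, if_neg hu0]
  exact (le_abs_self _).trans (((isConvexOfOrder_kfun hα1).mono hα0).abs_im_div_lt one_half_lt_one
    (fun v hv ↦ abs_im_hfun_lt_of_forall_im_hfun_lt (fun _ ↦ im_hfun_half_lt) hv) hu hu0).le

lemma continuousAt_hfun (α : ℝ) {u : ℂ} (hu : 1 - u ∈ Complex.slitPlane) :
    ContinuousAt (hfun α) u := by
  rw [hfun_eq_dslope]
  rcases eq_or_ne u 0 with rfl | hu0
  · exact continuousAt_dslope_same.2 (hasDerivAt_kfun α hu).differentiableAt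
  · exact (continuousAt_dslope_of_ne hu0).2 (hasDerivAt_kfun α hu).continuousAt

lemma im_hfun_le_pi_div_two_of_mem_sphere {α : ℝ} (hα0 : 1 / 2 ≤ α) (hα1 : α < 1) {w : ℂ}
    (hw : w ∈ sphere 0 1) (hslit : 1 - w ∈ Complex.slitPlane) :
    (hfun α w).im ≤ Real.pi / 2 := by
  have hw_closure : w ∈ closure unitDisk := by
    rw [unitDisk, closure_ball _ one_ne_zero]
    exact sphere_subset_closedBall hw
  have hcont := Complex.continuous_im.continuousAt.comp (continuousAt_hfun α hslit)
  exact closure_minimal (t := Iic (Real.pi / 2))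
    (image_subset_iff.2 fun u hu ↦ im_hfun_le_pi_div_two hα0 hα1 hu) isClosed_Iic
    (hcont.continuousWithinAt.mem_closure_image hw_closure)

lemma im_exp_mul_kfun_exp (α θ : ℝ) :
    (Complex.exp (-(θ : ℂ) * Complex.I) * kfun α (Complex.exp ((θ : ℂ) * Complex.I))).im =
      (hfun α (Complex.exp (θ * Complex.I))).im := by
  rw [hfun, if_neg (Complex.exp_ne_zero _), neg_mul, Complex.exp_neg, div_eq_inv_mul]

lemma Mconst_eq_sSup_image (α : ℝ) :
    Mconst α = sSup ((fun θ : ℝ ↦ (hfun α (Complex.exp (θ * Complex.I))).im) ''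
      Ioo 0 Real.pi) := by
  simp only [Mconst, im_exp_mul_kfun_exp, image, eq_comm]

lemma one_sub_exp_mul_I_mem_slitPlane {θ : ℝ} (hθ : θ ∈ Ioo 0 Real.pi) :
    1 - Complex.exp (θ * Complex.I) ∈ Complex.slitPlane := by
  refine Or.inr ?_
  rw [Complex.sub_im, Complex.one_im, Complex.exp_ofReal_mul_I_im, zero_sub]
  exact neg_ne_zero.2 (Real.sin_pos_of_mem_Ioo hθ).ne'

lemma pi_div_two_mem_upperBounds_im_hfun_exp {α : ℝ} (hα0 : 1 / 2 ≤ α) (hα1 : α < 1) :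
    Real.pi / 2 ∈ upperBounds ((fun θ : ℝ ↦ (hfun α (Complex.exp (θ * Complex.I))).im) ''
      Ioo 0 Real.pi) := by
  rintro _ ⟨θ, hθ, rfl⟩
  exact im_hfun_le_pi_div_two_of_mem_sphere hα0 hα1
    (mem_sphere_zero_iff_norm.2 (Complex.norm_exp_ofReal_mul_I θ))
    (one_sub_exp_mul_I_mem_slitPlane hθ)

lemma Mconst_le {α : ℝ} (hα0 : 1 / 2 ≤ α) (hα1 : α < 1) : Mconst α ≤ Real.pi / 2 := by
  rw [Mconst_eq_sSup_image]
  exact csSup_le ((nonempty_Ioo.2 Real.pi_pos).image _)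
    (pi_div_two_mem_upperBounds_im_hfun_exp hα0 hα1)

lemma im_hfun_exp_le_Mconst {α : ℝ} (hα0 : 1 / 2 ≤ α) (hα1 : α < 1) {θ : ℝ}
    (hθ : θ ∈ Ioo 0 Real.pi) : (hfun α (Complex.exp (θ * Complex.I))).im ≤ Mconst α := by
  rw [Mconst_eq_sSup_image]
  exact le_csSup ⟨_, pi_div_two_mem_upperBounds_im_hfun_exp hα0 hα1⟩ (mem_image_of_mem _ hθ)

lemma Mconst_pos {α : ℝ} (hα0 : 1 / 2 ≤ α) (hα1 : α < 1) : 0 < Mconst α := by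
  have hθ : Real.pi / 2 ∈ Ioo 0 Real.pi := ⟨by positivity, half_lt_self Real.pi_pos⟩
  refine (im_hfun_pos hα0 hα1 ?_).trans_le (im_hfun_exp_le_Mconst hα0 hα1 hθ)
  rw [Complex.exp_ofReal_mul_I_im]
  exact Real.sin_pos_of_mem_Ioo hθ

lemma one_sub_exp_mul_I (θ : ℝ) : 1 - Complex.exp (θ * Complex.I) =
    (2 * Real.sin (θ / 2) : ℝ) * Complex.exp (((θ - Real.pi) / 2 : ℝ) * Complex.I) := by
  have hsplit : Complex.exp (((θ - Real.pi) / 2 : ℝ) * Complex.I) =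
      Complex.exp (θ / 2 * Complex.I) * -Complex.I := by
    rw [← Complex.exp_neg_pi_div_two_mul_I, ← Complex.exp_add]
    push_cast
    ring_nf
  have hdouble : Complex.exp (θ * Complex.I) =
      Complex.exp (θ / 2 * Complex.I) * Complex.exp (θ / 2 * Complex.I) := by
    rw [← Complex.exp_add]
    ring_nf
  have hinv : Complex.exp (-(θ / 2) * Complex.I) * Complex.exp (θ / 2 * Complex.I) = 1 := by
    rw [← Complex.exp_add, neg_mul, neg_add_cancel, Complex.exp_zero]
  rw [hsplit, hdouble]
  push_cast
  rw [Complex.sin]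
  generalize Complex.exp (θ / 2 * Complex.I) = E, Complex.exp (-(θ / 2) * Complex.I) = E' at *
  linear_combination -hinv + (E' * E - E ^ 2) * Complex.I_sq

lemma log_one_sub_exp_mul_I {θ : ℝ} (hθ : θ ∈ Ioo 0 Real.pi) :
    Complex.log (1 - Complex.exp (θ * Complex.I)) =
      Real.log (2 * Real.sin (θ / 2)) + ((θ - Real.pi) / 2 : ℝ) * Complex.I := by
  have hsin : 0 < 2 * Real.sin (θ / 2) :=
    mul_pos two_pos (Real.sin_pos_of_pos_of_lt_pi (by linarith [hθ.1]) (by linarith [hθ.1, hθ.2]))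
  have him : (((θ - Real.pi) / 2 : ℝ) * Complex.I).im = (θ - Real.pi) / 2 := by simp
  rw [one_sub_exp_mul_I, Complex.log_ofReal_mul hsin (Complex.exp_ne_zero _), Complex.log_exp]
    <;> rw [him]
  · linarith [hθ.1, Real.pi_pos]
  · linarith [hθ.2, Real.pi_pos]

lemma im_hfun_half_exp {θ : ℝ} (hθ : θ ∈ Ioo 0 Real.pi) :
    (hfun (1 / 2) (Complex.exp (θ * Complex.I))).im = (Real.pi - θ) / 2 * Real.cos θ +
      Real.cos (θ / 2) * (2 * Real.sin (θ / 2) * Real.log (2 * Real.sin (θ / 2))) := by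
  have hsin : Real.sin θ = 2 * Real.sin (θ / 2) * Real.cos (θ / 2) := by
    rw [← Real.sin_two_mul, mul_div_cancel₀ _ two_ne_zero]
  rw [← im_exp_mul_kfun_exp, kfun, if_pos rfl, log_one_sub_exp_mul_I hθ, ← Complex.ofReal_neg,
    Complex.mul_im, Complex.exp_ofReal_mul_I_re, Complex.exp_ofReal_mul_I_im, Real.sin_neg,
    Real.cos_neg, hsin]
  simp only [Complex.neg_re, Complex.neg_im, Complex.add_re, Complex.add_im, Complex.ofReal_re,
    Complex.ofReal_im, Complex.re_ofReal_mul, Complex.im_ofReal_mul, Complex.I_re, Complex.I_im]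
  ring

lemma tendsto_im_hfun_half_exp :
    Tendsto (fun θ : ℝ ↦ (hfun (1 / 2) (Complex.exp (θ * Complex.I))).im) (nhdsWithin 0 (Ioi 0))
      (nhds (Real.pi / 2)) := by
  have hlog : Continuous fun θ : ℝ ↦ 2 * Real.sin (θ / 2) * Real.log (2 * Real.sin (θ / 2)) :=
    Real.continuous_mul_log.comp (by fun_prop : Continuous fun θ : ℝ ↦ 2 * Real.sin (θ / 2))
  have hcont : Continuous fun θ : ℝ ↦ (Real.pi - θ) / 2 * Real.cos θ +
      Real.cos (θ / 2) * (2 * Real.sin (θ / 2) * Real.log (2 * Real.sin (θ / 2))) :=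
    Continuous.fun_add (by fun_prop) (Continuous.fun_mul (by fun_prop) hlog)
  have h := (hcont.tendsto' 0 (Real.pi / 2) (by simp)).mono_left (nhdsWithin_le_nhds (s := Ioi 0))
  refine h.congr' ?_
  filter_upwards [Ioo_mem_nhdsGT Real.pi_pos] with θ hθ using (im_hfun_half_exp hθ).symm

lemma Mconst_half : Mconst (1 / 2) = Real.pi / 2 := by
  refine (Mconst_le le_rfl one_half_lt_one).antisymm (le_of_tendsto tendsto_im_hfun_half_exp ?_)
  filter_upwards [Ioo_mem_nhdsGT Real.pi_pos] with θ hθ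
  exact im_hfun_exp_le_Mconst le_rfl one_half_lt_one hθ

lemma im_hfun_le_Mconst_of_mem_sphere {α : ℝ} (hα0 : 1 / 2 ≤ α) (hα1 : α < 1) {w : ℂ}
    (hw : w ∈ sphere 0 1) : (hfun α w).im ≤ Mconst α := by
  have hw_norm : ‖w‖ = 1 := mem_sphere_zero_iff_norm.1 hw
  rcases lt_or_ge 0 w.im with him | him
  · have hpolar : Complex.exp (w.arg * Complex.I) = w := by
      simpa [hw_norm] using Complex.norm_mul_exp_arg_mul_I w
    have harg_pos : 0 < w.arg := (Complex.arg_nonneg_iff.2 him.le).lt_of_ne' fun h ↦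
      him.ne' (Complex.arg_eq_zero_iff.1 h).2
    rw [← hpolar]
    exact im_hfun_exp_le_Mconst hα0 hα1 ⟨harg_pos, Complex.arg_lt_pi_iff.2 (Or.inr him.ne')⟩
  · exact (im_hfun_nonpos hα0 hα1 hw_norm.le him).trans (Mconst_pos hα0 hα1).le

lemma continuousOn_hfun_closedBall {α : ℝ} (hα : 1 / 2 < α) :
    ContinuousOn (hfun α) (closedBall 0 1) := by
  rw [hfun_eq_dslope, continuousOn_dslope (closedBall_mem_nhds 0 zero_lt_one)]
  refine ⟨?_, (hasDerivAt_kfun α (by simp)).differentiableAt⟩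
  rw [show kfun α = fun u ↦ ((1 - u) ^ ((2 * α - 1 : ℝ) : ℂ) - 1) / ((1 - 2 * α : ℝ) : ℂ) from
    funext fun u ↦ if_neg hα.ne']
  refine ContinuousOn.div_const (ContinuousOn.sub (fun u hu ↦ ?_) continuousOn_const) _
  have hre : 0 ≤ (1 - u).re := by
    simpa using (Complex.re_le_norm u).trans (mem_closedBall_zero_iff.1 hu)
  have hpow := Complex.continuousAt_cpow_const_of_re_pos (z := 1 - u)
    (w := (2 * α - 1 : ℝ)) (Or.inl hre) (by simpa using by linarith)
  exact (hpow.comp' (f := fun u : ℂ ↦ 1 - u) (by fun_prop)).continuousWithinAt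

lemma im_lt_of_forall_mem_sphere {h : ℂ → ℂ} {c : ℂ} {R M : ℝ} (hh : DiffContOnCl ℂ h (ball c R))
    (hM : ∀ w ∈ sphere c R, (h w).im ≤ M) (hc : (h c).im < M) {u : ℂ} (hu : u ∈ ball c R) :
    (h u).im < M := by
  have hR : R ≠ 0 := (pos_of_mem_ball hu).ne'
  have hexp : DiffContOnCl ℂ (fun x ↦ Complex.exp (-Complex.I * h x)) (ball c R) :=
    Differentiable.comp_diffContOnCl (f := fun x ↦ Complex.exp (-Complex.I * x)) (by fun_prop) hh
  have hnorm (x : ℂ) : ‖Complex.exp (-Complex.I * h x)‖ = Real.exp (h x).im := by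
    simp [Complex.norm_exp]
  have hle (x : ℂ) (hx : x ∈ ball c R) : (h x).im ≤ M := by
    have := Complex.norm_le_of_forall_mem_frontier_norm_le isBounded_ball hexp
      (C := Real.exp M) (fun w hw ↦ by
        rw [frontier_ball c hR] at hw
        exact (hnorm w).trans_le (Real.exp_le_exp.2 (hM w hw))) (subset_closure hx)
    rwa [hnorm, Real.exp_le_exp] at this
  refine (hle u hu).lt_of_ne fun hu_eq ↦ hc.ne ?_
  have hmax : IsMaxOn (norm ∘ fun x ↦ Complex.exp (-Complex.I * h x)) (ball c R) u := fun x hx ↦ by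
    simpa only [Function.comp_apply, hnorm, hu_eq, mem_ofPred_eq, Real.exp_le_exp] using hle x hx
  have hconst := Complex.norm_eqOn_of_isPreconnected_of_isMaxOn (convex_ball c R).isPreconnected
    isOpen_ball hexp.differentiableOn hu hmax (mem_ball_self (pos_of_mem_ball hu))
  simpa only [Function.comp_apply, Function.const_apply, hnorm, hu_eq, Real.exp_eq_exp]
    using hconst

lemma abs_im_hfun_lt_Mconst {α : ℝ} (hα0 : 1 / 2 ≤ α) (hα1 : α < 1) {u : ℂ} (hu : u ∈ unitDisk) :
    |(hfun α u).im| < Mconst α := by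
  refine abs_im_hfun_lt_of_forall_im_hfun_lt (fun v hv ↦ ?_) hu
  rcases hα0.eq_or_lt with rfl | hα
  · exact Mconst_half ▸ im_hfun_half_lt hv
  · exact im_lt_of_forall_mem_sphere
      (.mk_ball (differentiableOn_hfun α) (continuousOn_hfun_closedBall hα))
      (fun w ↦ im_hfun_le_Mconst_of_mem_sphere hα0 hα1)
      (by simpa [hfun] using Mconst_pos hα0 hα1) hv

end

/-- for `1/2 ≤ α < 1` and `f ∈ K(α)`, `|Im(f(z)/z)| < M(α)` on `𝔻 \ {0}`,
and `M(α) ≤ M(1/2) = π/2`. -/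
theorem im_bound_of_convexOfOrder (α : ℝ) (hα0 : 1 / 2 ≤ α) (hα1 : α < 1)
    (f : ℂ → ℂ) (hf : IsConvexOfOrder α f) :
    (∀ z ∈ unitDisk, z ≠ 0 → |(f z / z).im| < Mconst α) ∧
    Mconst α ≤ Mconst (1 / 2) ∧ Mconst (1 / 2) = Real.pi / 2 := by
  refine ⟨fun z hz hz0 ↦ ?_, ?_, Mconst_half⟩
  · exact hf.abs_im_div_lt hα1 (fun u ↦ abs_im_hfun_lt_Mconst hα0 hα1) hz hz0
  · exact (Mconst_le hα0 hα1).trans_eq Mconst_half.symm
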